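/- arXiv:1811.12657 — 3 statements merged into one kernel-verified Lean document; each statement's English description precedes it below -/
import Mathlib

section
/- Let S* be a canonical optimal schedule for the index order. Then for every region R_x = [τ_x, τ_{x+1}) of S*, there is at most one index k ∈ {1,…,K} such that the interval I_k contains, within R_x, both a utilized and an unutilized slot (i.e., at most one interval is partially utilized in R_x). -/
open Finset

/-- A schedule: assigns to each unit time slot `[t,t+1)` at most one job;
each job `j` receives exactly `p j` slots, and no slot at or beyond the horizon `D` is used. -/
structure Schedule (n : ℕ) (p : Fin n → ℕ) (D : ℕ) where
  assign : ℕ → Option (Fin n)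
  card_slots : ∀ j : Fin n,
    ((Finset.range D).filter (fun t => assign t = some j)).card = p j
  beyond : ∀ t, D ≤ t → assign t = none

variable {n D : ℕ} {p : Fin n → ℕ}

/-- The set of time slots assigned to job `j`. -/
def jobSlots (S : Schedule n p D) (j : Fin n) : Finset ℕ :=
  (Finset.range D).filter (fun t => S.assign t = some j)

/-- The start time of job `j`: the least `t` with `S.assign t = some j`. -/
noncomputable def startTime (S : Schedule n p D) (j : Fin n) : ℕ :=
  sInf {t | S.assign t = some j}

/-- The completion time of job `j`: one plus the greatest `t` with `S.assign t = some j`. -/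
def completion (S : Schedule n p D) (j : Fin n) : ℕ :=
  (jobSlots S j).sup id + 1

/-- The utilization cost of a schedule: total tariff of all utilized slots. -/
def ucost (e : ℕ → ℚ) (S : Schedule n p D) : ℚ :=
  ∑ t ∈ (Finset.range D).filter (fun t => S.assign t ≠ none), e t

/-- The weighted total cost: `∑_j w_j C_j(S) + E(S)`. -/
def wcost (w : Fin n → ℚ) (e : ℕ → ℚ) (S : Schedule n p D) : ℚ :=
  (∑ j : Fin n, w j * (completion S j : ℚ)) + ucost e S

/-- `S` processes jobs in the order of their indices: every slot of a smaller-indexed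
job precedes every slot of a larger-indexed job. -/
def RespectsOrder (S : Schedule n p D) : Prop :=
  ∀ j k : Fin n, j < k → ∀ t t', S.assign t = some j → S.assign t' = some k → t < t'

/-- The tie-breaking value `∑_{t utilized} t`. -/
def tieVal (S : Schedule n p D) : ℕ :=
  ∑ t ∈ (Finset.range D).filter (fun t => S.assign t ≠ none), t

/-- Membership in the set `P = (⋃_k {s_k, s_k+1}) ∪ {D}` of potential split points,
for boundaries `σ : Fin (K+1) → ℕ` (0-based: interval `k` is `[σ k.castSucc, σ k.succ)`). -/
def inP (K : ℕ) (σ : Fin (K+1) → ℕ) (D t : ℕ) : Prop :=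
  (∃ k : Fin K, t = σ k.castSucc ∨ t = σ k.castSucc + 1) ∨ t = D

/-- `t` is a split point of `S`: `t ∈ P` and every job starting before `t` completes by `t`. -/
def IsSplit (K : ℕ) (σ : Fin (K+1) → ℕ) (S : Schedule n p D) (t : ℕ) : Prop :=
  inP K σ D t ∧ ∀ j : Fin n, startTime S j < t ↔ completion S j ≤ t

/-- `e_max^j`: the maximum tariff among the slots assigned to job `j`. -/
def emax (e : ℕ → ℚ) (S : Schedule n p D) (j : Fin n) : ℚ :=
  WithBot.unbotD 0 (((jobSlots S j).image e).max)

/-- The quantity `e_max^j + ∑_{j' < j} w_{j'}` whose maximum over a region defines `Δ_x`. -/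
def dval (w : Fin n → ℚ) (e : ℕ → ℚ) (S : Schedule n p D) (j : Fin n) : ℚ :=
  emax e S j + ∑ j' ∈ Finset.univ.filter (fun j' => j' < j), w j'

/-- `I_k` is partially utilized within the region `[a, b)`: it contains, within the
region, both a utilized and an unutilized slot. -/
def PartiallyIn {n D : ℕ} {p : Fin n → ℕ} (K : ℕ) (σ : Fin (K+1) → ℕ)
    (S : Schedule n p D) (a b : ℕ) (k : Fin K) : Prop :=
  (∃ t, σ k.castSucc ≤ t ∧ t < σ k.succ ∧ a ≤ t ∧ t < b ∧ S.assign t ≠ none) ∧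
  (∃ t, σ k.castSucc ≤ t ∧ t < σ k.succ ∧ a ≤ t ∧ t < b ∧ S.assign t = none)

lemma aux_ivt (q : ℕ → Prop) (a b : ℕ) (hab : a < b) (ha : q a) (hb : ¬ q b) :
    ∃ y, a ≤ y ∧ y < b ∧ q y ∧ ¬ q (y+1) := by
  by_contra! hcon
  have : ∀ m, a ≤ m → m ≤ b → q m := by
    intro m hm
    induction m, hm using Nat.le_induction with
    | base => intro _; exact ha
    | succ m hm ih => intro h; exact hcon m hm (by omega) (ih (by omega))
  exact hb (this b hab.le le_rfl)

def usedSet {n D : ℕ} {p : Fin n → ℕ} (S : Schedule n p D) : Finset ℕ :=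
  (Finset.range D).filter (fun t => S.assign t ≠ none)

lemma mem_usedSet {n D : ℕ} {p : Fin n → ℕ} (S : Schedule n p D) (t : ℕ) :
    t ∈ usedSet S ↔ S.assign t ≠ none := by
  simp only [usedSet, Finset.mem_filter, Finset.mem_range, and_iff_right_iff_imp]
  intro h
  by_contra hc
  exact h (S.beyond t (by omega))

lemma mem_jobSlots {n D : ℕ} {p : Fin n → ℕ} (S : Schedule n p D) (j : Fin n) (t : ℕ) :
    t ∈ jobSlots S j ↔ S.assign t = some j := by
  simp only [jobSlots, Finset.mem_filter, Finset.mem_range, and_iff_right_iff_imp]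
  intro h
  by_contra hc
  rw [S.beyond t (by omega)] at h
  simp at h

lemma completion_eq_last {n D : ℕ} {p : Fin n → ℕ} (S : Schedule n p D) (j : Fin n) (t : ℕ)
    (h : S.assign t = some j) (hl : ∀ u, S.assign u = some j → u ≤ t) :
    completion S j = t + 1 := by
  unfold completion
  congr 1
  apply le_antisymm
  · apply Finset.sup_le
    intro u hu
    exact hl u ((mem_jobSlots S j u).1 hu)
  · exact Finset.le_sup (f := id) ((mem_jobSlots S j t).2 h)

lemma exists_last {n D : ℕ} {p : Fin n → ℕ} (hp : ∀ j, 1 ≤ p j) (S : Schedule n p D) (j : Fin n) :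
    ∃ t, S.assign t = some j ∧ ∀ u, S.assign u = some j → u ≤ t := by
  have hne : (jobSlots S j).Nonempty := by
    rw [← Finset.card_pos]
    have := S.card_slots j
    have := hp j
    unfold jobSlots
    omega
  refine ⟨(jobSlots S j).max' hne, (mem_jobSlots S j _).1 (Finset.max'_mem _ _), ?_⟩
  intro u hu
  exact Finset.le_max' _ _ ((mem_jobSlots S j u).2 hu)

/-- transport a schedule along an increasing map of used slots -/
lemma exists_map {n D : ℕ} {p : Fin n → ℕ} (S : Schedule n p D) (f : ℕ → ℕ)
    (hf : ∀ u v, S.assign u ≠ none → S.assign v ≠ none → u < v → f u < f v)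
    (hD : ∀ u, S.assign u ≠ none → f u < D) :
    ∃ S' : Schedule n p D, ∀ t j, S'.assign t = some j ↔ ∃ u, S.assign u = some j ∧ f u = t := by
  classical
  have hinj : ∀ u v, S.assign u ≠ none → S.assign v ≠ none → f u = f v → u = v := by
    intro u v hu hv h
    rcases lt_trichotomy u v with h1 | h1 | h1
    · have := hf u v hu hv h1; omega
    · exact h1
    · have := hf v u hv hu h1; omega
  let g : ℕ → Option (Fin n) := fun t =>
    if h : ∃ u, S.assign u ≠ none ∧ f u = t then S.assign h.choose else none
  have hg : ∀ t j, g t = some j ↔ ∃ u, S.assign u = some j ∧ f u = t := by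
    intro t j
    by_cases h : ∃ u, S.assign u ≠ none ∧ f u = t
    · have hgt : g t = S.assign h.choose := dif_pos h
      obtain ⟨h1, h2⟩ := h.choose_spec
      rw [hgt]
      constructor
      · intro h3; exact ⟨_, h3, h2⟩
      · rintro ⟨u, hu, hut⟩
        rw [hinj h.choose u h1 (by simp [hu]) (by omega)]
        exact hu
    · have hgt : g t = none := dif_neg h
      rw [hgt]
      constructor
      · intro h3; simp at h3
      · rintro ⟨u, hu, hut⟩
        exact absurd ⟨u, by simp [hu], hut⟩ h
  refine ⟨⟨g, ?_, ?_⟩, hg⟩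
  · intro j
    have : (Finset.range D).filter (fun t => g t = some j) = (jobSlots S j).image f := by
      ext t
      simp only [Finset.mem_filter, Finset.mem_range, Finset.mem_image, mem_jobSlots, hg]
      constructor
      · rintro ⟨_, h⟩; exact h
      · rintro ⟨u, hu, rfl⟩
        exact ⟨hD u (by simp [hu]), u, hu, rfl⟩
    rw [this, Finset.card_image_of_injOn]
    · exact S.card_slots j
    · intro u hu v hv huv
      have hu' := (mem_jobSlots S j u).1 hu
      have hv' := (mem_jobSlots S j v).1 hv
      exact hinj u v (by simp [hu']) (by simp [hv']) huv
  · intro t ht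
    by_contra hc
    obtain ⟨j, hj⟩ := Option.ne_none_iff_exists'.1 hc
    obtain ⟨u, hu, hut⟩ := (hg t j).1 hj
    have := hD u (by simp [hu])
    omega

lemma exists_map' {n D : ℕ} {p : Fin n → ℕ} (w : Fin n → ℚ) (e : ℕ → ℚ)
    (S : Schedule n p D) (hord : RespectsOrder S)
    (L : Fin n → ℕ) (hL : ∀ j, S.assign (L j) = some j)
    (hL' : ∀ j u, S.assign u = some j → u ≤ L j) (f : ℕ → ℕ) (V : Finset ℕ)
    (hf : ∀ u v, S.assign u ≠ none → S.assign v ≠ none → u < v → f u < f v)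
    (hD : ∀ u, S.assign u ≠ none → f u < D)
    (hV : ∀ u, S.assign u ≠ none → f u ∈ V) (hVc : V.card ≤ (usedSet S).card) :
    ∃ S' : Schedule n p D, RespectsOrder S' ∧
      wcost w e S' = ∑ j, w j * ((f (L j) : ℚ) + 1) + ∑ t ∈ V, e t ∧
      tieVal S' = ∑ t ∈ V, t := by
  classical
  obtain ⟨S', hS'⟩ := exists_map S f hf hD
  have hinj : Set.InjOn f (usedSet S) := by
    intro u hu v hv h
    have hu := (mem_usedSet S u).1 hu
    have hv := (mem_usedSet S v).1 hv
    rcases lt_trichotomy u v with h1 | h1 | h1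
    · have := hf u v hu hv h1; omega
    · exact h1
    · have := hf v u hv hu h1; omega
  have himg : (usedSet S).image f = V := by
    apply Finset.eq_of_subset_of_card_le
    · intro t ht
      obtain ⟨u, hu, rfl⟩ := Finset.mem_image.1 ht
      exact hV u ((mem_usedSet S u).1 hu)
    · rw [Finset.card_image_of_injOn hinj]; exact hVc
  have hU : usedSet S' = V := by
    rw [← himg]
    ext t
    simp only [mem_usedSet, Finset.mem_image, Option.ne_none_iff_exists', hS']
    constructor
    · rintro ⟨j, u, h1, h2⟩; exact ⟨u, ⟨j, h1⟩, h2⟩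
    · rintro ⟨u, ⟨j, h1⟩, h2⟩; exact ⟨j, u, h1, h2⟩
  have hC : ∀ j, completion S' j = f (L j) + 1 := by
    intro j
    apply completion_eq_last
    · exact (hS' _ _).2 ⟨_, hL j, rfl⟩
    · intro t ht
      obtain ⟨u, hu, rfl⟩ := (hS' _ _).1 ht
      rcases (hL' j u hu).lt_or_eq with h | h
      · exact (hf u _ (by simp [hu]) (by simp [hL]) h).le
      · rw [h]
  refine ⟨S', ?_, ?_, ?_⟩
  · intro j k hjk t t' ht ht'
    obtain ⟨u, hu, rfl⟩ := (hS' _ _).1 ht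
    obtain ⟨v, hv, rfl⟩ := (hS' _ _).1 ht'
    exact hf u v (by simp [hu]) (by simp [hv]) (hord j k hjk u v hu hv)
  · have h2 : ucost e S' = ∑ t ∈ V, e t := by rw [← hU]; rfl
    unfold wcost
    rw [h2]
    simp [hC]
  · rw [← hU]; rfl

lemma split_crit {n D : ℕ} {p : Fin n → ℕ}
    (S : Schedule n p D) (hord : RespectsOrder S)
    (L : Fin n → ℕ) (hL : ∀ j, S.assign (L j) = some j)
    (hL' : ∀ j u, S.assign u = some j → u ≤ L j) (i : Fin n) (d : ℕ) (hd : L i < d)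
    (hgap : ∀ u, L i < u → u < d → S.assign u = none) (j : Fin n) :
    startTime S j < d ↔ completion S j ≤ d := by
  have hs : S.assign (startTime S j) = some j :=
    Nat.sInf_mem (s := {t | S.assign t = some j}) ⟨L j, hL j⟩
  have hc := completion_eq_last S j (L j) (hL j) (hL' j)
  rw [hc]
  have h1 := hL' j _ hs
  constructor
  · intro h
    have h2 : startTime S j ≤ L i := by
      by_contra h3
      have := hgap _ (by omega) h
      simp [this] at hs
    rcases lt_trichotomy i j with h3 | h3 | h3
    · have := hord i j h3 _ _ (hL i) hs
      omega
    · subst h3; omega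
    · have := hord j i h3 _ _ (hL j) (hL i)
      omega
  · intro h; omega

/-- In a canonical optimal schedule, each region contains at most one partially
utilized interval. -/
theorem at_most_one_partial_interval (n : ℕ) (p : Fin n → ℕ) (hp : ∀ j, 1 ≤ p j)
    (w : Fin n → ℚ) (hw : ∀ j, 0 ≤ w j)
    (e : ℕ → ℚ) (he : ∀ t, 0 ≤ e t) (D : ℕ) (hD : ∑ j, p j ≤ D)
    (K : ℕ) (σ : Fin (K+1) → ℕ) (hσ0 : σ 0 = 0) (hσD : σ (Fin.last K) = D)
    (hmono : StrictMono σ) (ec : Fin K → ℚ)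
    (hconst : ∀ k : Fin K, ∀ t, σ k.castSucc ≤ t → t < σ k.succ → e t = ec k)
    (S : Schedule n p D) (hord : RespectsOrder S)
    (hopt : ∀ S' : Schedule n p D, RespectsOrder S' → wcost w e S ≤ wcost w e S')
    (htie : ∀ S' : Schedule n p D, RespectsOrder S' → wcost w e S' = wcost w e S →
      tieVal S ≤ tieVal S')
    (a b : ℕ) (hsa : IsSplit K σ S a) (hsb : IsSplit K σ S b) (hab : a < b)
    (hcons : ∀ t, a < t → t < b → ¬ IsSplit K σ S t) :
    ∀ k₁ k₂ : Fin K, PartiallyIn K σ S a b k₁ → PartiallyIn K σ S a b k₂ → k₁ = k₂ := by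
  classical
  choose L hL hL' using exists_last hp S
  have hcost : wcost w e S = ∑ j, w j * ((L j : ℚ) + 1) + ∑ t ∈ usedSet S, e t := by
    have h2 : ucost e S = ∑ t ∈ usedSet S, e t := rfl
    unfold wcost
    rw [h2]
    simp [fun j => completion_eq_last S j (L j) (hL j) (hL' j)]
  have htv : tieVal S = ∑ t ∈ usedSet S, t := rfl
  have hltD : ∀ t, S.assign t ≠ none → t < D := by
    intro t ht
    by_contra hc
    exact ht (S.beyond t (by omega))
  have hsum : ∀ (M : Type) [AddCommGroup M] (g : ℕ → M) (x y : ℕ), x ∉ usedSet S → y ∈ usedSet S →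
      ∑ t ∈ insert x ((usedSet S).erase y), g t = ∑ t ∈ usedSet S, g t + g x - g y := by
    intro M _ g x y hx hy
    rw [Finset.sum_insert (fun h => hx (Finset.mem_of_mem_erase h)), ← Finset.sum_erase_add _ _ hy]
    abel
  have hcardV : ∀ x y, y ∈ usedSet S →
      (insert x ((usedSet S).erase y)).card ≤ (usedSet S).card := by
    intro x y hy
    have h1 := Finset.card_insert_le x ((usedSet S).erase y)
    have h2 := Finset.card_erase_add_one hy
    omega
  have hV : ∀ x y t, t ∈ insert x ((usedSet S).erase y) ↔
      (t = x ∨ (t ≠ y ∧ S.assign t ≠ none)) := by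
    intro x y t
    rw [Finset.mem_insert, Finset.mem_erase, mem_usedSet]
  have htieV : ∀ x y, x ∉ usedSet S → y ∈ usedSet S → x < y →
      ∑ t ∈ insert x ((usedSet S).erase y), t < ∑ t ∈ usedSet S, t := by
    intro x y hx hy hxy
    rw [Finset.sum_insert (fun h => hx (Finset.mem_of_mem_erase h)), ← Finset.sum_erase_add _ _ hy]
    omega
  -- adjacent exchange
  have hadj : ∀ t, S.assign t = none → S.assign (t+1) ≠ none → e t ≠ e (t+1) := by
    intro t h0 h1 hee
    have ht0 : t ∉ usedSet S := by rw [mem_usedSet]; simp [h0]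
    have ht1 : t + 1 ∈ usedSet S := by rw [mem_usedSet]; exact h1
    obtain ⟨S', ho, hc, hv⟩ := exists_map' w e S hord L hL hL'
      (fun u => if u = t + 1 then t else u) (insert t ((usedSet S).erase (t+1)))
      (by
        intro u v hu hv huv
        have : u ≠ t := by rintro rfl; exact hu h0
        split_ifs <;> omega)
      (by
        intro u hu
        have := hltD u hu
        split_ifs <;> omega)
      (by
        intro u hu
        rw [hV]
        split_ifs with h
        · left; rfl
        · right; exact ⟨h, hu⟩)
      (hcardV _ _ ht1)
    have hle : wcost w e S' ≤ wcost w e S := by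
      rw [hc, hcost, hsum ℚ e _ _ ht0 ht1, hee]
      have : ∑ j, w j * (((if L j = t + 1 then t else L j : ℕ) : ℚ) + 1)
          ≤ ∑ j, w j * ((L j : ℚ) + 1) := by
        apply Finset.sum_le_sum
        intro j _
        apply mul_le_mul_of_nonneg_left _ (hw j)
        have : (if L j = t + 1 then t else L j : ℕ) ≤ L j := by split_ifs <;> omega
        have : ((if L j = t + 1 then t else L j : ℕ) : ℚ) ≤ (L j : ℚ) := by exact_mod_cast this
        linarith
      linarith
    have h3 := htie S' ho (le_antisymm hle (hopt S' ho))
    have h4 := htieV _ _ ht0 ht1 (by omega)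
    omega
  have hpack : ∀ k : Fin K, ∀ t, σ k.castSucc ≤ t → t + 1 < σ k.succ → S.assign t = none →
      S.assign (t+1) = none := by
    intro k t h1 h2 h3
    by_contra h4
    exact hadj t h3 h4 (by rw [hconst k t h1 (by omega), hconst k (t+1) (by omega) h2])
  have hstart : ∀ d, 0 < d → S.assign d ≠ none → S.assign (d-1) = none →
      ∃ k : Fin K, d = σ k.castSucc := by
    intro d hd h1 h2
    have hdD := hltD d h1
    by_contra! hcon
    have : ∀ i : Fin (K+1), σ i ≤ d := by
      intro i
      induction i using Fin.induction with
      | zero => omega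
      | succ k ih =>
        by_contra hlt
        have := hcon k
        apply h1
        have h5 := hpack k (d-1) (by omega) (by omega) h2
        rwa [Nat.sub_add_cancel hd] at h5
    have := this (Fin.last K)
    omega
  have hpart : ∀ k, PartiallyIn K σ S a b k → ∃ y, σ k.castSucc ≤ y ∧ y + 1 < σ k.succ ∧
      a ≤ y ∧ y + 1 < b ∧ S.assign y ≠ none ∧ S.assign (y+1) = none := by
    rintro k ⟨⟨t1, h1, h2, h3, h4, h5⟩, ⟨t2, g1, g2, g3, g4, g5⟩⟩
    rcases lt_trichotomy t1 t2 with h | h | h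
    · obtain ⟨y, y1, y2, y3, y4⟩ := aux_ivt (fun t => S.assign t ≠ none) t1 t2 h h5 (by simpa using g5)
      exact ⟨y, by omega, by omega, by omega, by omega, y3, by simpa using y4⟩
    · subst h; exact absurd g5 h5
    · obtain ⟨y, y1, y2, y3, y4⟩ := aux_ivt (fun t => S.assign t = none) t2 t1 h g5 h5
      exact absurd (hpack k y (by omega) (by omega) y3) y4
  have key : ∀ k₁ k₂ : Fin K, PartiallyIn K σ S a b k₁ → PartiallyIn K σ S a b k₂ →
      ¬ k₁ < k₂ := by
    intro k₁ k₂ hk₁ hk₂ hlt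
    obtain ⟨x, x1, x2, x3, x4, x5, x6⟩ := hpart k₁ hk₁
    obtain ⟨y, y1, y2, y3, y4, y5, y6⟩ := hpart k₂ hk₂
    have hσ : σ k₁.succ ≤ σ k₂.castSucc := hmono.monotone (by
      rw [Fin.le_def]; simp; exact hlt)
    have hxy : x + 1 < y := by omega
    have hyD : y + 1 < D := by
      have := hmono.monotone (Fin.le_last k₂.succ)
      omega
    have hex : e (x+1) = e x := by
      rw [hconst k₁ x x1 (by omega), hconst k₁ (x+1) (by omega) x2]
    have hey : e (y+1) = e y := by
      rw [hconst k₂ y y1 (by omega), hconst k₂ (y+1) (by omega) y2]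
    have hnx : ∀ t, ∃ d, t < y → t < d ∧ d ≤ y ∧ S.assign d ≠ none ∧
        ∀ u, t < u → u < d → S.assign u = none := by
      intro t
      by_cases ht : t < y
      · have hE : ∃ d, t < d ∧ S.assign d ≠ none := ⟨y, ht, y5⟩
        refine ⟨Nat.find hE, fun _ => ⟨(Nat.find_spec hE).1, Nat.find_min' hE ⟨ht, y5⟩,
          (Nat.find_spec hE).2, ?_⟩⟩
        intro u hu hud
        have := Nat.find_min hE hud
        by_contra hc
        exact this ⟨hu, hc⟩
      · exact ⟨0, fun h => absurd h ht⟩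
    have hpv : ∀ t, ∃ d, x < t → d < t ∧ x ≤ d ∧ S.assign d ≠ none ∧
        ∀ u, d < u → u < t → S.assign u = none := by
      intro t
      by_cases ht : x < t
      · refine ⟨Nat.findGreatest (fun d => S.assign d ≠ none) (t-1), fun _ => ⟨?_, ?_, ?_, ?_⟩⟩
        · have := Nat.findGreatest_le (P := fun d => S.assign d ≠ none) (t-1)
          omega
        · exact Nat.le_findGreatest (by omega) x5
        · exact Nat.findGreatest_spec (P := fun d => S.assign d ≠ none) (m := x) (by omega) x5
        · intro u hu hut
          by_contra hc
          exact Nat.findGreatest_is_greatest hu (by omega) hc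
      · exact ⟨0, fun h => absurd h ht⟩
    choose nx hnx using hnx
    choose pv hpv using hpv
    -- no completion before a gap
    have f1 : ∀ j, x ≤ L j → L j < y → S.assign (L j + 1) ≠ none := by
      intro j hj1 hj2 hnone
      obtain ⟨d1, d2, d3, d4⟩ := hnx (L j) hj2
      have hd1 : nx (L j) ≠ L j + 1 := by intro h; rw [h] at d3; exact d3 hnone
      obtain ⟨k, hk⟩ := hstart (nx (L j)) (by omega) d3 (d4 _ (by omega) (by omega))
      exact hcons (nx (L j)) (by omega) (by omega)
        ⟨Or.inl ⟨k, Or.inl hk⟩, split_crit S hord L hL hL' j _ d1 d4⟩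
    have f2 : ∀ j, x < L j → L j ≤ y → S.assign (L j - 1) ≠ none := by
      intro j hj1 hj2 hnone
      obtain ⟨k, hk⟩ := hstart (L j) (by omega) (by simp [hL]) hnone
      exact hcons (L j + 1) (by omega) (by omega)
        ⟨Or.inl ⟨k, Or.inr (by omega)⟩, split_crit S hord L hL hL' j _ (by omega)
          (by intro u h1 h2; omega)⟩
    have hxU : x ∈ usedSet S := (mem_usedSet S x).2 x5
    have hyU : y ∈ usedSet S := (mem_usedSet S y).2 y5
    have hx1U : x + 1 ∉ usedSet S := by rw [mem_usedSet]; simp [x6]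
    have hy1U : y + 1 ∉ usedSet S := by rw [mem_usedSet]; simp [y6]
    obtain ⟨fA, hfA⟩ : ∃ fA : ℕ → ℕ, ∀ t, fA t =
      if x < t ∧ t ≤ y then max (x+1) (pv t) else t := ⟨_, fun _ => rfl⟩
    obtain ⟨fB, hfB⟩ : ∃ fB : ℕ → ℕ, ∀ t, fB t =
      if x ≤ t ∧ t < y then nx t else if t = y then y + 1 else t := ⟨_, fun _ => rfl⟩
    obtain ⟨A, Ao, Ac, Av⟩ := exists_map' w e S hord L hL hL' fA
      (insert (x+1) ((usedSet S).erase y))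
      (by
        intro u v hu hv huv
        have hux : u ≠ x + 1 := by rintro rfl; exact hu x6
        have hpu := hpv u
        have hpv' := hpv v
        have huv' : x < v → u ≤ pv v := by
          intro h
          by_contra hc
          exact hu ((hpv' h).2.2.2 u (by omega) huv)
        rw [hfA, hfA]
        split_ifs with c1 c2 c2
        · have := huv' (by omega)
          have := (hpu (by omega)).1
          omega
        · have := (hpu (by omega)).1
          omega
        · have := huv' (by omega)
          omega
        · exact huv)
      (by
        intro u hu
        have := hltD u hu
        rw [hfA]
        split_ifs with c1
        · have := (hpv u c1.1).1
          omega
        · exact this)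
      (by
        intro u hu
        rw [hV, hfA]
        split_ifs with c1
        · obtain ⟨d1, d2, d3, d4⟩ := hpv u c1.1
          by_cases h : pv u ≤ x + 1
          · left; omega
          · right
            rw [max_eq_right (by omega)]
            exact ⟨by omega, d3⟩
        · right; exact ⟨by omega, hu⟩)
      (hcardV _ _ hyU)
    obtain ⟨B, Bo, Bc, Bv⟩ := exists_map' w e S hord L hL hL' fB
      (insert (y+1) ((usedSet S).erase x))
      (by
        intro u v hu hv huv
        have hvy : v ≠ y + 1 := by rintro rfl; exact hv y6
        have hnu := hnx u
        have hnv := hnx v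
        have huv' : u < y → nx u ≤ v := by
          intro h
          by_contra hc
          exact hv ((hnu h).2.2.2 v huv (by omega))
        rw [hfB, hfB]
        split_ifs with c1 c2 c3 c2 c3 c4 c5
        all_goals first
          | omega
          | (have := huv' (by omega)
             have := (hnv (by omega)).1
             omega)
          | (have := huv' (by omega)
             omega)
          | (have := (hnv (by omega)).1
             omega))
      (by
        intro u hu
        have := hltD u hu
        rw [hfB]
        split_ifs with c1
        · have := (hnx u c1.2).2.1
          omega
        · omega
        · exact this)
      (by
        intro u hu
        rw [hV, hfB]
        split_ifs with c1 c2
        · obtain ⟨d1, d2, d3, d4⟩ := hnx u c1.2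
          right
          exact ⟨by omega, d3⟩
        · left; rfl
        · right; exact ⟨by omega, hu⟩)
      (hcardV _ _ hxU)
    have hAB : ∀ j, fA (L j) + fB (L j) = 2 * L j := by
      intro j
      have g1 := f1 j
      have g2 := f2 j
      have hnx1 : L j ≠ x + 1 := by
        intro h
        have := hL j
        rw [h, x6] at this
        simp at this
      have hnx0 : L j ≠ x := by
        intro h
        rw [h] at g1
        exact g1 le_rfl (by omega) x6
      rw [hfA, hfB]
      by_cases c1 : x < L j ∧ L j ≤ y
      · obtain ⟨d1, d2, d3, d4⟩ := hpv (L j) c1.1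
        have hp1 : pv (L j) = L j - 1 := by
          by_contra hc
          exact g2 c1.1 c1.2 (d4 _ (by omega) (by omega))
        rw [if_pos c1, hp1]
        by_cases c2 : L j < y
        · obtain ⟨d1, d2, d3, d4⟩ := hnx (L j) c2
          have hn1 : nx (L j) = L j + 1 := by
            by_contra hc
            exact g1 (by omega) c2 (d4 _ (by omega) (by omega))
          rw [if_pos ⟨by omega, c2⟩, hn1]
          omega
        · rw [if_neg (by omega), if_pos (by omega)]
          omega
      · rw [if_neg c1, if_neg (by omega), if_neg (by omega)]
        omega
    have hsumAB : ∑ j, w j * ((fA (L j) : ℚ) + 1) + ∑ j, w j * ((fB (L j) : ℚ) + 1) =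
        2 * ∑ j, w j * ((L j : ℚ) + 1) := by
      rw [← Finset.sum_add_distrib, Finset.mul_sum]
      apply Finset.sum_congr rfl
      intro j _
      have : (fA (L j) : ℚ) + fB (L j) = 2 * L j := by exact_mod_cast hAB j
      linear_combination w j * this
    rw [hsum ℚ e _ _ hx1U hyU] at Ac
    rw [hsum ℚ e _ _ hy1U hxU] at Bc
    have hA := hopt A Ao
    have hB := hopt B Bo
    have hAeq : wcost w e A = wcost w e S := by linarith
    have h3 := htie A Ao hAeq
    have h4 := htieV _ _ hx1U hyU hxy
    omega
  intro k₁ k₂ h₁ h₂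
  rcases lt_trichotomy k₁ k₂ with h | h | h
  · exact absurd h (key _ _ h₁ h₂)
  · exact h
  · exact absurd h (key _ _ h₂ h₁)
end

section
/- Let S* be a canonical optimal schedule for the index order, let R_x = [τ_x, τ_{x+1}) be a region of S*, let J_x = {j | S_j ∈ R_x}, and let j_x be the largest-indexed job in J_x attaining Δ_x = max_{j ∈ J_x}(e_max^j + ∑_{j' < j} w_{j'}). Suppose k ∈ {1,…,K} is such that I_k is partially utilized (at least one but not all slots of I_k are utilized) and the utilized slots of I_k lie in R_x. Then either (i) I_k is the last interval of R_x, i.e., τ_{x+1} ≤ s_{k+1}, or (ii) j_x is the largest-indexed job having a slot in I_k and e_k = e_max^{j_x}. -/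
open Finset

variable {n D : ℕ} {p : Fin n → ℕ}

theorem mem_js (S : Schedule n p D) (j : Fin n) (t : ℕ) :
    t ∈ jobSlots S j ↔ S.assign t = some j := by
  unfold jobSlots
  rw [Finset.mem_filter, Finset.mem_range]
  refine ⟨fun h => h.2, fun h => ⟨?_, h⟩⟩
  by_contra hc
  have := S.beyond t (by omega)
  simp_all

theorem sum_util (S : Schedule n p D) (f : ℕ → ℚ) :
    ∑ t ∈ (Finset.range D).filter (fun t => S.assign t ≠ none), f t
      = ∑ i, ∑ t ∈ jobSlots S i, f t := by
  rw [← Finset.sum_biUnion]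
  · apply Finset.sum_congr _ (fun _ _ => rfl)
    ext t
    simp only [Finset.mem_filter, Finset.mem_biUnion, Finset.mem_univ, true_and, mem_js,
      Finset.mem_range]
    constructor
    · rintro ⟨_, h⟩
      exact Option.ne_none_iff_exists'.1 h
    · rintro ⟨i, h⟩
      exact ⟨by by_contra hc; have := S.beyond t (by omega); simp_all, by simp [h]⟩
  · intro i _ k _ hik
    simp only [Function.onFun]
    rw [Finset.disjoint_left]
    intro x hx hy
    rw [mem_js] at hx hy
    rw [hx] at hy
    exact hik (by simpa using hy)

theorem le_L (S : Schedule n p D) {j : Fin n} {t : ℕ} (h : t ∈ jobSlots S j) :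
    t ≤ (jobSlots S j).sup id := Finset.le_sup (f := id) h

theorem L_mem (S : Schedule n p D) (hp : ∀ j, 1 ≤ p j) (j : Fin n) :
    (jobSlots S j).sup id ∈ jobSlots S j := by
  have hne : (jobSlots S j).Nonempty := by
    rw [← Finset.card_pos]
    have := S.card_slots j
    have := hp j
    unfold jobSlots
    omega
  obtain ⟨x, hx, h⟩ := Finset.exists_mem_eq_sup _ hne (id : ℕ → ℕ)
  rw [h]; exact hx

theorem ord' {S : Schedule n p D} (hord : RespectsOrder S) {i k : Fin n} (h : i < k)
    {x y : ℕ} (hx : x ∈ jobSlots S i) (hy : y ∈ jobSlots S k) : x < y :=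
  hord i k h x y ((mem_js _ _ _).1 hx) ((mem_js _ _ _).1 hy)

theorem exists_sched (A : Fin n → Finset ℕ) (hA : ∀ i, ∀ x ∈ A i, x < D)
    (hc : ∀ i, (A i).card = p i)
    (ho : ∀ i k, i < k → ∀ x ∈ A i, ∀ y ∈ A k, x < y) :
    ∃ S : Schedule n p D, RespectsOrder S ∧ ∀ i, jobSlots S i = A i := by
  classical
  have huniq : ∀ i k x, x ∈ A i → x ∈ A k → i = k := by
    intro i k x hi hk
    rcases lt_trichotomy i k with h | h | h
    · exact absurd (ho i k h x hi x hk) (lt_irrefl _)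
    · exact h
    · exact absurd (ho k i h x hk x hi) (lt_irrefl _)
  let f : ℕ → Option (Fin n) := fun t => if h : ∃ i, t ∈ A i then some h.choose else none
  have hf : ∀ t i, f t = some i ↔ t ∈ A i := by
    intro t i
    by_cases h : ∃ i, t ∈ A i
    · have : f t = some h.choose := dif_pos h
      rw [this]
      constructor
      · intro h2
        have h3 := h.choose_spec
        rw [Option.some_inj.1 h2] at h3
        exact h3
      · intro h2
        rw [huniq _ _ _ h.choose_spec h2]
    · have : f t = none := dif_neg h
      rw [this]
      simp only [reduceCtorEq, false_iff]
      exact fun h2 => h ⟨i, h2⟩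
  have hset : ∀ i, (Finset.range D).filter (fun t => f t = some i) = A i := by
    intro i
    ext t
    rw [Finset.mem_filter, hf, Finset.mem_range]
    exact ⟨fun h => h.2, fun h => ⟨hA i t h, h⟩⟩
  refine ⟨⟨f, fun j => by rw [hset, hc], ?_⟩, ?_, fun i => hset i⟩
  · intro t ht
    apply dif_neg
    rintro ⟨i, h⟩
    have := hA i t h
    omega
  · intro i k h t t' h1 h2
    exact ho i k h t ((hf _ _).1 h1) t' ((hf _ _).1 h2)

def Opt (w : Fin n → ℚ) (e : ℕ → ℚ) (S : Schedule n p D) : Prop :=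
  (∀ S' : Schedule n p D, RespectsOrder S' → wcost w e S ≤ wcost w e S') ∧
    (∀ S' : Schedule n p D, RespectsOrder S' → wcost w e S' = wcost w e S →
      tieVal S ≤ tieVal S')

theorem key {w : Fin n → ℚ} {e : ℕ → ℚ} {S : Schedule n p D} (hS : Opt w e S)
    (hp : ∀ j, 1 ≤ p j) (hw : ∀ j, 0 ≤ w j)
    (A : Fin n → Finset ℕ) (hA : ∀ i, ∀ x ∈ A i, x < D)
    (hc : ∀ i, (A i).card = p i)
    (ho : ∀ i k, i < k → ∀ x ∈ A i, ∀ y ∈ A k, x < y)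
    (d : Fin n → ℚ) (hd : ∀ i, ∀ x ∈ A i, (x : ℚ) ≤ ((jobSlots S i).sup id : ℕ) + d i)
    (tin tout : ℕ)
    (hf : ∀ f : ℕ → ℚ, ∑ i, ∑ t ∈ A i, f t = ∑ i, ∑ t ∈ jobSlots S i, f t + (f tin - f tout)) :
    0 ≤ ∑ i, w i * d i + (e tin - e tout) ∧
    (∑ i, w i * d i + (e tin - e tout) = 0 → tout ≤ tin) := by
  obtain ⟨S', hS', hj⟩ := exists_sched A hA hc ho
  have hu : ucost e S' = ucost e S + (e tin - e tout) := by
    unfold ucost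
    rw [sum_util, sum_util, ← hf]
    simp only [hj]
  have htv : (tieVal S' : ℚ) = tieVal S + (tin - tout) := by
    unfold tieVal
    push_cast
    rw [sum_util, sum_util, ← hf (fun x => (x : ℚ))]
    simp only [hj]
  have hcost : wcost w e S' ≤ wcost w e S + (∑ i, w i * d i + (e tin - e tout)) := by
    unfold wcost
    rw [hu]
    have : ∑ j, w j * (completion S' j : ℚ) ≤
        ∑ j, w j * (completion S j : ℚ) + ∑ i, w i * d i := by
      rw [← Finset.sum_add_distrib]
      apply Finset.sum_le_sum
      intro i _
      rw [← mul_add]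
      apply mul_le_mul_of_nonneg_left _ (hw i)
      have h1 := hd i _ (by rw [← hj i]; exact L_mem S' hp i)
      unfold completion
      push_cast
      linarith
    linarith
  have h1 := hS.1 S' hS'
  refine ⟨by linarith, fun h0 => ?_⟩
  have h2 := hS.2 S' hS' (by linarith)
  have h3 : (tieVal S : ℚ) ≤ tieVal S' := by exact_mod_cast h2
  have : (tout : ℚ) ≤ tin := by linarith
  exact_mod_cast this

theorem exch {w : Fin n → ℚ} {e : ℕ → ℚ} {S : Schedule n p D} (hS : Opt w e S)
    (hord : RespectsOrder S)
    (hp : ∀ j, 1 ≤ p j) (hw : ∀ j, 0 ≤ w j)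
    (lo hi : Fin n) (inn out : Fin n → ℕ)
    (hin : ∀ i, lo ≤ i → i ≤ hi → inn i ∉ jobSlots S i)
    (hinD : ∀ i, lo ≤ i → i ≤ hi → inn i < D)
    (hout : ∀ i, lo ≤ i → i ≤ hi → out i ∈ jobSlots S i)
    (h1 : ∀ i k, i < k → lo ≤ i → i ≤ hi → ∀ y ∈ jobSlots S k, (k ≤ hi → y ≠ out k) → inn i < y)
    (h2 : ∀ i k, i < k → lo ≤ k → k ≤ hi → ∀ y ∈ jobSlots S i, (lo ≤ i → y ≠ out i) → y < inn k)
    (h3 : ∀ i k, i < k → lo ≤ i → k ≤ hi → inn i < inn k)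
    (d : ℚ)
    (hd : ∀ i, lo ≤ i → i ≤ hi → ∀ x, x = inn i ∨ (x ∈ jobSlots S i ∧ x ≠ out i) →
      (x : ℚ) ≤ ((jobSlots S i).sup id : ℕ) + if lo ≤ i ∧ i < hi then d else 0)
    (tin tout : ℕ)
    (hf : ∀ f : ℕ → ℚ, ∑ i, (if lo ≤ i ∧ i ≤ hi then f (inn i) - f (out i) else 0)
      = f tin - f tout) :
    0 ≤ d * ∑ i ∈ Finset.Ico lo hi, w i + (e tin - e tout) ∧
    (d * ∑ i ∈ Finset.Ico lo hi, w i + (e tin - e tout) = 0 → tout ≤ tin) := by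
  classical
  let dd : Fin n → ℚ := fun i => if lo ≤ i ∧ i < hi then d else 0
  have hdd : ∑ i, w i * dd i = d * ∑ i ∈ Finset.Ico lo hi, w i := by
    rw [Finset.mul_sum]
    simp only [dd, mul_ite, mul_zero]
    rw [← Finset.sum_filter]
    apply Finset.sum_congr
    · ext i; simp
    · intros; ring
  let A : Fin n → Finset ℕ := fun i => if lo ≤ i ∧ i ≤ hi then
    insert (inn i) ((jobSlots S i).erase (out i)) else jobSlots S i
  have hmem : ∀ i x, x ∈ A i ↔ (lo ≤ i ∧ i ≤ hi ∧ x = inn i) ∨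
      (x ∈ jobSlots S i ∧ ¬ (lo ≤ i ∧ i ≤ hi ∧ x = out i)) := by
    intro i x
    by_cases h : lo ≤ i ∧ i ≤ hi
    · simp only [A, if_pos h, Finset.mem_insert, Finset.mem_erase]
      tauto
    · simp only [A, if_neg h]
      tauto
  rw [← hdd]
  apply key hS hp hw A
  · intro i x hx
    rcases (hmem i x).1 hx with h | h
    · rw [h.2.2]; exact hinD i h.1 h.2.1
    · have := h.1
      unfold jobSlots at this
      simp at this
      exact this.1
  · intro i
    have hcs : (jobSlots S i).card = p i := S.card_slots i
    by_cases h : lo ≤ i ∧ i ≤ hi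
    · simp only [A, if_pos h]
      rw [Finset.card_insert_of_notMem, Finset.card_erase_of_mem (hout i h.1 h.2), hcs]
      · have := hp i; omega
      · intro hh
        exact hin i h.1 h.2 (Finset.mem_of_mem_erase hh)
    · simp only [A, if_neg h, hcs]
  · intro i k hik x hx y hy
    rcases (hmem i x).1 hx with h | h <;> rcases (hmem k y).1 hy with h' | h'
    · rw [h.2.2, h'.2.2]; exact h3 i k hik h.1 h'.2.1
    · rw [h.2.2]
      exact h1 i k hik h.1 h.2.1 y h'.1 (fun a b => h'.2 ⟨h.1.trans hik.le, a, b⟩)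
    · rw [h'.2.2]
      exact h2 i k hik h'.1 h'.2.1 x h.1 (fun a b => h.2 ⟨a, hik.le.trans h'.2.1, b⟩)
    · exact ord' hord hik h.1 h'.1
  · intro i x hx
    by_cases hb : lo ≤ i ∧ i ≤ hi
    · apply hd i hb.1 hb.2
      rcases (hmem i x).1 hx with h | h
      · exact Or.inl h.2.2
      · exact Or.inr ⟨h.1, fun h' => h.2 ⟨hb.1, hb.2, h'⟩⟩
    · have hn : ¬ (lo ≤ i ∧ i < hi) := fun h => hb ⟨h.1, h.2.le⟩
      simp only [dd, if_neg hn, add_zero]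
      rcases (hmem i x).1 hx with h | h
      · exact absurd ⟨h.1, h.2.1⟩ hb
      · exact_mod_cast le_L S h.1
  · intro f
    rw [← hf f, ← Finset.sum_add_distrib]
    apply Finset.sum_congr rfl
    intro i _
    by_cases h : lo ≤ i ∧ i ≤ hi
    · simp only [A, if_pos h]
      rw [Finset.sum_insert (fun hh => hin i h.1 h.2 (Finset.mem_of_mem_erase hh)),
        Finset.sum_erase_eq_sub (hout i h.1 h.2)]
      ring
    · simp only [A, if_neg h, add_zero]

theorem tele (lo hi : Fin n) (hlh : lo ≤ hi) (G : ℕ → ℚ) :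
    ∑ i : Fin n, (if lo ≤ i ∧ i ≤ hi then G (i + 1) - G i else 0) = G (hi + 1) - G lo := by
  have := Fin.sum_univ_eq_sum_range
    (fun i : ℕ => if (lo : ℕ) ≤ i ∧ i ≤ (hi : ℕ) then G (i + 1) - G i else 0) n
  simp only [Fin.le_def]
  rw [this, ← Finset.sum_filter]
  have h2 : (Finset.range n).filter (fun i => (lo : ℕ) ≤ i ∧ i ≤ (hi : ℕ))
      = Finset.Ico (lo : ℕ) (hi + 1) := by
    ext i
    simp only [Finset.mem_filter, Finset.mem_range, Finset.mem_Ico]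
    have := hi.2
    omega
  rw [h2, Finset.sum_Ico_sub]
  have : (lo : ℕ) ≤ hi := hlh
  omega

/-- last slot of job of index `i`, natural index -/
noncomputable def LN (S : Schedule n p D) (i : ℕ) : ℕ :=
  if h : i < n then (jobSlots S ⟨i, h⟩).sup id else 0

theorem LN_eq (S : Schedule n p D) (i : Fin n) : LN S i = (jobSlots S i).sup id := by
  unfold LN
  rw [dif_pos i.2]

theorem LN_mem (S : Schedule n p D) (hp : ∀ j, 1 ≤ p j) (i : Fin n) :
    LN S i ∈ jobSlots S i := by
  rw [LN_eq]; exact L_mem S hp i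

theorem le_LN (S : Schedule n p D) {i : Fin n} {x : ℕ} (h : x ∈ jobSlots S i) :
    x ≤ LN S i := by
  rw [LN_eq]; exact le_L S h

theorem lt_D (S : Schedule n p D) {i : Fin n} {x : ℕ} (h : x ∈ jobSlots S i) : x < D := by
  unfold jobSlots at h
  simp at h
  exact h.1

noncomputable def gl (S : Schedule n p D) (lo hi x y : ℕ) (c : ℕ) (i : ℕ) : ℕ :=
  if i = lo then x else if i = hi + 1 then y else LN S (i - 1) + c

theorem left {w : Fin n → ℚ} {e : ℕ → ℚ} {S : Schedule n p D} (hS : Opt w e S)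
    (hord : RespectsOrder S)
    (hp : ∀ j, 1 ≤ p j) (hw : ∀ j, 0 ≤ w j)
    (lo hi : Fin n) (hlh : lo ≤ hi) (t t' : ℕ) (ht : t ∈ jobSlots S hi)
    (ht' : t' ∉ jobSlots S lo) (htL : t' < LN S lo)
    (hb : ∀ i, i < lo → ∀ x ∈ jobSlots S i, x < t')
    (ha : ∀ i, lo < i → ∀ x ∈ jobSlots S i, t' < x) :
    e t + ∑ i ∈ Finset.Ico lo hi, w i ≤ e t' ∧
    (e t + ∑ i ∈ Finset.Ico lo hi, w i = e t' → t ≤ t') := by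
  have hlh' : (lo : ℕ) ≤ hi := hlh
  have glo : ∀ i : Fin n, i = lo → gl S lo hi t' t 0 i = t' := by
    intro i h; simp [gl, h]
  have gpr : ∀ i : Fin n, lo < i → i ≤ hi → ∃ k : Fin n, lo ≤ k ∧ k < i ∧ (k : ℕ) + 1 = i ∧
      gl S lo hi t' t 0 i = LN S k := by
    intro i h h'
    have h1 : (lo : ℕ) < i := h
    have h2 : (i : ℕ) ≤ hi := h'
    refine ⟨⟨i - 1, by omega⟩, ?_, ?_, ?_, ?_⟩
    · rw [Fin.le_def]; simp; omega
    · rw [Fin.lt_def]; simp; omega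
    · simp; omega
    · unfold gl; rw [if_neg (by omega), if_neg (by omega)]; simp
  have ghi : ∀ i : Fin n, i = hi → gl S lo hi t' t 0 (i + 1) = t := by
    intro i h
    unfold gl; rw [if_neg (by rw [h]; omega), if_pos (by rw [h])]
  have gmid : ∀ i : Fin n, lo ≤ i → i < hi → gl S lo hi t' t 0 (i + 1) = LN S i := by
    intro i h h'
    have h1 : (lo : ℕ) ≤ i := h
    have h2 : (i : ℕ) < hi := h'
    unfold gl; rw [if_neg (by omega), if_neg (by omega)]; simp
  have hm := LN_mem S hp
  have hle : ∀ i : Fin n, ∀ x ∈ jobSlots S i, x ≤ LN S i := fun i x h => le_LN S h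
  have hoo : ∀ i k : Fin n, i < k → ∀ x ∈ jobSlots S i, ∀ y ∈ jobSlots S k, x < y :=
    fun i k h x hx y hy => ord' hord h hx hy
  have hD : ∀ i : Fin n, LN S i < D := fun i => lt_D S (hm i)
  have := exch hS hord hp hw lo hi (fun i => gl S lo hi t' t 0 i)
    (fun i => gl S lo hi t' t 0 (i + 1)) (d := -1) (tin := t') (tout := t) (e := e)
    ?_ ?_ ?_ ?_ ?_ ?_ ?_ ?_
  · constructor
    · linarith [this.1]
    · intro h; apply this.2; linarith
  · intro i h h'
    rcases eq_or_lt_of_le h with h1 | h1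
    · rw [glo i h1.symm, ← h1]; exact ht'
    · obtain ⟨k, hk1, hk2, _, hk⟩ := gpr i h1 h'
      rw [hk]
      intro h4
      exact lt_irrefl _ (hoo k i hk2 _ (hm k) _ h4)
  · intro i h h'
    rcases eq_or_lt_of_le h with h1 | h1
    · rw [glo i h1.symm]; exact htL.trans (hD lo)
    · obtain ⟨k, hk1, hk2, _, hk⟩ := gpr i h1 h'
      rw [hk]; exact hD k
  · intro i h h'
    rcases eq_or_lt_of_le h' with h1 | h1
    · rw [ghi i h1, h1]; exact ht
    · rw [gmid i h h1]; exact hm i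
  · intro i k hik h h' y hy _
    rcases eq_or_lt_of_le h with h1 | h1
    · rw [glo i h1.symm]; exact ha k (h1 ▸ hik) y hy
    · obtain ⟨m, hk1, hk2, _, hk⟩ := gpr i h1 h'
      rw [hk]; exact hoo m k (hk2.trans hik) _ (hm m) _ hy
  · intro i k hik h h' y hy hne
    rcases eq_or_lt_of_le h with h1 | h1
    · rw [glo k h1.symm]; exact hb i (h1 ▸ hik) y hy
    · obtain ⟨m, hk1, hk2, hk3, hk⟩ := gpr k h1 h'
      rw [hk]
      have him : i ≤ m := by rw [Fin.le_def]; rw [Fin.lt_def] at hik; omega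
      rcases eq_or_lt_of_le him with h5 | h5
      · subst h5
        have := hne hk1
        rw [gmid i hk1 (hik.trans_le h')] at this
        exact lt_of_le_of_ne (hle _ _ hy) this
      · exact hoo i m h5 _ hy _ (hm m)
  · intro i k hik h h'
    obtain ⟨m, hk1, hk2, hk3, hk⟩ := gpr k (h.trans_lt hik) h'
    rw [hk]
    have him : i ≤ m := by rw [Fin.le_def]; rw [Fin.lt_def] at hik; omega
    rcases eq_or_lt_of_le h with h1 | h1
    · rw [glo i h1.symm]
      rcases eq_or_lt_of_le hk1 with h5 | h5
      · rw [← h5]; exact htL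
      · exact ha m h5 _ (hm m)
    · obtain ⟨m', hl1, hl2, hl3, hl⟩ := gpr i h1 (hik.le.trans h')
      rw [hl]
      exact hoo m' m (hl2.trans_le him) _ (hm m') _ (hm m)
  · intro i h h' x hx
    rw [← LN_eq]
    have hx2 : x ≤ LN S i ∧ (i < hi → x < LN S i) := by
      rcases hx with hx | ⟨hx, hx2⟩
      · suffices x < LN S i from ⟨this.le, fun _ => this⟩
        rcases eq_or_lt_of_le h with h1 | h1
        · rw [hx, glo i h1.symm, ← h1]; exact htL
        · obtain ⟨m, hk1, hk2, _, hk⟩ := gpr i h1 h'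
          rw [hx, hk]; exact hoo m i hk2 _ (hm m) _ (hm i)
      · refine ⟨hle _ _ hx, fun h5 => ?_⟩
        rw [gmid i h h5] at hx2
        exact lt_of_le_of_ne (hle _ _ hx) hx2
    split_ifs with h6
    · have := hx2.2 h6.2
      have : (x : ℚ) + 1 ≤ LN S i := by exact_mod_cast this
      linarith
    · have : (x : ℚ) ≤ LN S i := by exact_mod_cast hx2.1
      linarith
  · intro f
    have := tele lo hi hlh (fun i => - f (gl S lo hi t' t 0 i))
    simp only [glo lo rfl, ghi hi rfl] at this
    rw [show f t' - f t = -f t - -f t' by ring, ← this]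
    apply Finset.sum_congr rfl
    intro i _
    split_ifs <;> ring

theorem right {w : Fin n → ℚ} {e : ℕ → ℚ} {S : Schedule n p D} (hS : Opt w e S)
    (hord : RespectsOrder S)
    (hp : ∀ j, 1 ≤ p j) (hw : ∀ j, 0 ≤ w j)
    (lo hi : Fin n) (hlh : lo < hi) (t t' : ℕ) (ht : t ∈ jobSlots S lo)
    (ht' : t' ∉ jobSlots S hi) (htL : t' < LN S hi)
    (hb : ∀ i, i < hi → ∀ x ∈ jobSlots S i, x + 1 < t')
    (ha : ∀ i, hi < i → ∀ x ∈ jobSlots S i, t' < x)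
    (hcont : ∀ i k : Fin n, lo ≤ i → (i : ℕ) + 1 = k → k ≤ hi → LN S i + 1 ∈ jobSlots S k) :
    e t ≤ e t' + ∑ i ∈ Finset.Ico lo hi, w i := by
  have hlh' : (lo : ℕ) < hi := hlh
  have ghi : ∀ i : Fin n, i = hi → gl S lo hi t t' 1 (i + 1) = t' := by
    intro i h
    unfold gl; rw [if_neg (by rw [h]; omega), if_pos (by rw [h])]
  have gmid : ∀ i : Fin n, lo ≤ i → i < hi → gl S lo hi t t' 1 (i + 1) = LN S i + 1 := by
    intro i h h'
    have h1 : (lo : ℕ) ≤ i := h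
    have h2 : (i : ℕ) < hi := h'
    unfold gl; rw [if_neg (by omega), if_neg (by omega)]; simp
  have glo : ∀ i : Fin n, i = lo → gl S lo hi t t' 1 i = t := by
    intro i h; simp [gl, h]
  have gpr : ∀ i : Fin n, lo < i → i ≤ hi → ∃ k : Fin n, lo ≤ k ∧ k < i ∧ (k : ℕ) + 1 = i ∧
      gl S lo hi t t' 1 i = LN S k + 1 := by
    intro i h h'
    have h1 : (lo : ℕ) < i := h
    have h2 : (i : ℕ) ≤ hi := h'
    refine ⟨⟨i - 1, by omega⟩, ?_, ?_, ?_, ?_⟩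
    · rw [Fin.le_def]; simp; omega
    · rw [Fin.lt_def]; simp; omega
    · simp; omega
    · unfold gl; rw [if_neg (by omega), if_neg (by omega)]
  have hm := LN_mem S hp
  have hle : ∀ i : Fin n, ∀ x ∈ jobSlots S i, x ≤ LN S i := fun i x h => le_LN S h
  have hoo : ∀ i k : Fin n, i < k → ∀ x ∈ jobSlots S i, ∀ y ∈ jobSlots S k, x < y :=
    fun i k h x hx y hy => ord' hord h hx hy
  have hD : ∀ i : Fin n, LN S i < D := fun i => lt_D S (hm i)
  have hnext : ∀ i : Fin n, i < hi → ∃ k : Fin n, (i : ℕ) + 1 = k ∧ k ≤ hi ∧ i < k ∧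
      (∀ m, i < m → k ≤ m) := by
    intro i h
    have h2 : (i : ℕ) < hi := h
    refine ⟨⟨i + 1, by omega⟩, rfl, ?_, ?_, ?_⟩
    · rw [Fin.le_def]; simp; omega
    · rw [Fin.lt_def]; simp
    · intro m hm; rw [Fin.le_def]; rw [Fin.lt_def] at hm; simp; omega
  have := exch hS hord hp hw lo hi (fun i => gl S lo hi t t' 1 (i + 1))
    (fun i => gl S lo hi t t' 1 i) (d := 1) (tin := t') (tout := t) (e := e)
    ?_ ?_ ?_ ?_ ?_ ?_ ?_ ?_
  · linarith [this.1]
  · intro i h h'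
    rcases eq_or_lt_of_le h' with h1 | h1
    · rw [ghi i h1, h1]; exact ht'
    · rw [gmid i h h1]; intro h4; have := hle _ _ h4; omega
  · intro i h h'
    rcases eq_or_lt_of_le h' with h1 | h1
    · rw [ghi i h1]; exact htL.trans (hD hi)
    · rw [gmid i h h1]
      obtain ⟨k, hk1, hk2, _, _⟩ := hnext i h1
      exact lt_D S (hcont i k h hk1 hk2)
  · intro i h h'
    rcases eq_or_lt_of_le h with h1 | h1
    · rw [glo i h1.symm, ← h1]; exact ht
    · obtain ⟨k, hk1, hk2, hk3, hk⟩ := gpr i h1 h'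
      rw [hk]; exact hcont k i hk1 hk3 h'
  · intro i k hik h h' y hy hne
    rcases eq_or_lt_of_le h' with h1 | h1
    · rw [ghi i h1]; exact ha k (h1 ▸ hik) y hy
    · rw [gmid i h h1]
      obtain ⟨m, hm1, hm2, hm3, hm4⟩ := hnext i h1
      rcases eq_or_lt_of_le (hm4 k hik) with h5 | h5
      · subst h5
        have h6 := hne hm2
        obtain ⟨q, _, _, hq3, hq⟩ := gpr m (h.trans_lt hm3) hm2
        have : q = i := by ext; omega
        rw [hq, this] at h6
        have := hoo i m hik _ (hm i) _ hy
        omega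
      · exact hoo m k h5 _ (hcont i m h hm1 hm2) _ hy
  · intro i k hik h h' y hy hne
    rcases eq_or_lt_of_le h' with h1 | h1
    · rw [ghi k h1]; have := hb i (h1 ▸ hik) y hy; omega
    · rw [gmid k h h1]; have := hoo i k hik y hy _ (hm k); omega
  · intro i k hik h h'
    rw [gmid i h (hik.trans_le h')]
    rcases eq_or_lt_of_le h' with h1 | h1
    · rw [ghi k h1]; exact hb i (h1 ▸ hik) _ (hm i)
    · rw [gmid k (h.trans hik.le) h1]; have := hoo i k hik _ (hm i) _ (hm k); omega
  · intro i h h' x hx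
    rw [← LN_eq]
    have hx2 : x ≤ LN S i + 1 ∧ (i = hi → x ≤ LN S i) := by
      rcases hx with hx | ⟨hx, hx2⟩
      · rcases eq_or_lt_of_le h' with h1 | h1
        · rw [hx, ghi i h1, h1]; exact ⟨by omega, fun _ => htL.le⟩
        · rw [hx, gmid i h h1]; exact ⟨le_rfl, fun hh => absurd hh h1.ne⟩
      · have := hle _ _ hx
        exact ⟨by omega, fun _ => this⟩
    split_ifs with h6
    · exact_mod_cast hx2.1
    · have : x ≤ LN S i := hx2.2 (le_antisymm h' (not_lt.1 fun hh => h6 ⟨h, hh⟩))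
      have : (x : ℚ) ≤ LN S i := by exact_mod_cast this
      linarith
  · intro f
    have := tele lo hi hlh.le (fun i => f (gl S lo hi t t' 1 i))
    simp only [glo lo rfl, ghi hi rfl] at this
    exact this

theorem pre_sum (w : Fin n → ℚ) {j k : Fin n} (h : j ≤ k) :
    ∑ i ∈ Finset.univ.filter (fun i => i < k), w i =
    ∑ i ∈ Finset.univ.filter (fun i => i < j), w i + ∑ i ∈ Finset.Ico j k, w i := by
  rw [← Finset.sum_union]
  · apply Finset.sum_congr _ (fun _ _ => rfl)
    ext i
    simp only [Finset.mem_filter, Finset.mem_univ, true_and, Finset.mem_union, Finset.mem_Ico]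
    constructor
    · intro h1
      rcases lt_or_ge i j with h2 | h2
      · exact Or.inl h2
      · exact Or.inr ⟨h2, h1⟩
    · rintro (h1 | h1)
      · exact h1.trans_le h
      · exact h1.2
  · rw [Finset.disjoint_left]
    intro i hi hi2
    simp only [Finset.mem_filter, Finset.mem_univ, true_and, Finset.mem_Ico] at hi hi2
    exact absurd hi (not_lt.2 hi2.1)

theorem emax_spec (e : ℕ → ℚ) (S : Schedule n p D) (hp : ∀ j, 1 ≤ p j) (j : Fin n) :
    (∃ t ∈ jobSlots S j, e t = emax e S j) ∧ ∀ t ∈ jobSlots S j, e t ≤ emax e S j := by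
  have hne : ((jobSlots S j).image e).Nonempty :=
    ⟨_, Finset.mem_image_of_mem e (L_mem S hp j)⟩
  have : emax e S j = ((jobSlots S j).image e).max' hne := by
    unfold emax
    rw [← Finset.coe_max' hne]
    rfl
  rw [this]
  constructor
  · have := Finset.max'_mem _ hne
    rw [Finset.mem_image] at this
    exact this
  · intro t ht
    exact Finset.le_max' _ _ (Finset.mem_image_of_mem e ht)

theorem start_spec (S : Schedule n p D) (hp : ∀ j, 1 ≤ p j) (j : Fin n) :
    startTime S j ∈ jobSlots S j ∧ ∀ t ∈ jobSlots S j, startTime S j ≤ t := by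
  constructor
  · rw [mem_js]
    exact Nat.sInf_mem (s := {t | S.assign t = some j}) ⟨_, (mem_js _ _ _).1 (L_mem S hp j)⟩
  · intro t ht
    exact Nat.sInf_le (s := {t | S.assign t = some j}) ((mem_js _ _ _).1 ht)

theorem compl_eq (S : Schedule n p D) (j : Fin n) : completion S j = LN S j + 1 := by
  rw [LN_eq]; rfl

theorem inP_σ (K : ℕ) (σ : Fin (K+1) → ℕ) (D : ℕ) (hσD : σ (Fin.last K) = D) (m : Fin (K+1)) :
    inP K σ D (σ m) := by
  rcases Fin.eq_castSucc_or_eq_last m with ⟨k, rfl⟩ | rfl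
  · exact Or.inl ⟨k, Or.inl rfl⟩
  · exact Or.inr hσD

theorem find_int (K : ℕ) (σ : Fin (K+1) → ℕ) (D : ℕ) (hσ0 : σ 0 = 0) (hσD : σ (Fin.last K) = D)
    (x : ℕ) (hx : x < D) : ∃ q : Fin K, σ q.castSucc ≤ x ∧ x < σ q.succ := by
  by_contra hc
  push Not at hc
  have : ∀ m : Fin (K+1), σ m ≤ x := by
    intro m
    induction m using Fin.induction with
    | zero => rw [hσ0]; exact Nat.zero_le _
    | succ i ih => exact hc i ih
  have := this (Fin.last K)
  omega

theorem gap {w : Fin n → ℚ} {e : ℕ → ℚ} {S : Schedule n p D} (hS : Opt w e S)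
    (hord : RespectsOrder S)
    (hp : ∀ j, 1 ≤ p j) (hw : ∀ j, 0 ≤ w j) (s1 s2 : ℕ) (c : ℚ)
    (hconst : ∀ t, s1 ≤ t → t < s2 → e t = c)
    (t' t : ℕ) (h1 : s1 ≤ t') (h2 : t' < t) (h3 : t < s2) (hn : S.assign t' = none) :
    S.assign t = none := by
  classical
  by_contra hc
  have hex : ∃ u, t' < u ∧ S.assign u ≠ none := ⟨t, h2, hc⟩
  obtain ⟨hu1, hu2⟩ := Nat.find_spec hex
  have hmin : ∀ v, t' < v → v < Nat.find hex → S.assign v = none := by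
    intro v hv hv2
    have := Nat.find_min hex hv2
    by_contra h
    exact this ⟨hv, h⟩
  have hut : Nat.find hex ≤ t := Nat.find_min' hex ⟨h2, hc⟩
  set u := Nat.find hex
  obtain ⟨j, hj⟩ := Option.ne_none_iff_exists'.1 hu2
  have huj : u ∈ jobSlots S j := (mem_js _ _ _).2 hj
  have := left hS hord hp hw j j le_rfl u t' huj (by rw [mem_js, hn]; simp)
    (lt_of_lt_of_le hu1 (le_LN S huj))
    (by
      intro i hi x hx
      have hxu := ord' hord hi hx huj
      rw [mem_js] at hx
      by_contra hcon
      rcases eq_or_lt_of_le (not_lt.1 hcon) with h | h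
      · rw [h] at hn; simp [hn] at hx
      · have := hmin x h hxu
        simp [this] at hx)
    (fun i hi x hx => hu1.trans (ord' hord hi huj hx))
  have h4 := this.2 (by
    rw [hconst u (by omega) (by omega), hconst t' (by omega) (by omega)]; simp)
  omega

/-- If `I_k` is partially utilized and its utilized slots lie in the region `[a, b)`,
then either `I_k` is the last interval of the region, or `j_x` is the largest-indexed
job with a slot in `I_k` and `e_k = e_max^(j_x)`. -/
theorem partial_interval_position (n : ℕ) (p : Fin n → ℕ) (hp : ∀ j, 1 ≤ p j)
    (w : Fin n → ℚ) (hw : ∀ j, 0 ≤ w j)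
    (e : ℕ → ℚ) (he : ∀ t, 0 ≤ e t) (D : ℕ) (hD : ∑ j, p j ≤ D)
    (K : ℕ) (σ : Fin (K+1) → ℕ) (hσ0 : σ 0 = 0) (hσD : σ (Fin.last K) = D)
    (hmono : StrictMono σ) (ec : Fin K → ℚ)
    (hconst : ∀ k : Fin K, ∀ t, σ k.castSucc ≤ t → t < σ k.succ → e t = ec k)
    (S : Schedule n p D) (hord : RespectsOrder S)
    (hopt : ∀ S' : Schedule n p D, RespectsOrder S' → wcost w e S ≤ wcost w e S')
    (htie : ∀ S' : Schedule n p D, RespectsOrder S' → wcost w e S' = wcost w e S →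
      tieVal S ≤ tieVal S')
    (a b : ℕ) (hsa : IsSplit K σ S a) (hsb : IsSplit K σ S b) (hab : a < b)
    (hcons : ∀ t, a < t → t < b → ¬ IsSplit K σ S t)
    (jx : Fin n) (hjx_start : a ≤ startTime S jx ∧ startTime S jx < b)
    (hjx_max : ∀ j : Fin n, a ≤ startTime S j → startTime S j < b →
      dval w e S j ≤ dval w e S jx)
    (hjx_last : ∀ j : Fin n, a ≤ startTime S j → startTime S j < b →
      dval w e S j = dval w e S jx → j ≤ jx)
    (k : Fin K)
    (hpart1 : ∃ t, σ k.castSucc ≤ t ∧ t < σ k.succ ∧ S.assign t ≠ none)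
    (hpart2 : ∃ t, σ k.castSucc ≤ t ∧ t < σ k.succ ∧ S.assign t = none)
    (hin : ∀ t, σ k.castSucc ≤ t → t < σ k.succ → S.assign t ≠ none → a ≤ t ∧ t < b) :
    b ≤ σ k.succ ∨
      ((∃ t, σ k.castSucc ≤ t ∧ t < σ k.succ ∧ S.assign t = some jx) ∧
       (∀ j : Fin n, (∃ t, σ k.castSucc ≤ t ∧ t < σ k.succ ∧ S.assign t = some j) → j ≤ jx) ∧
       ec k = emax e S jx) := by
  have hS : Opt w e S := ⟨hopt, htie⟩
  by_cases hbk : b ≤ σ k.succ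
  · exact Or.inl hbk
  right
  push Not at hbk
  have hm := LN_mem S hp
  obtain ⟨u0, hu01, hu02, hu03⟩ := hpart1
  obtain ⟨t', ht'1, ht'2, ht'n⟩ := hpart2
  have hgap := fun q => gap hS hord hp hw (σ q.castSucc) (σ q.succ) (ec q) (hconst q)
  have hinu0 := hin u0 hu01 hu02 hu03
  -- the job crossing the right end of the interval
  have hns := hcons (σ k.succ) (by omega) hbk
  have hcross : ∃ j : Fin n, startTime S j < σ k.succ ∧ σ k.succ ≤ LN S j := by
    by_contra hc
    push Not at hc
    apply hns
    refine ⟨inP_σ K σ D hσD _, fun j => ?_⟩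
    have h1 := (start_spec S hp j).2 _ (hm j)
    have h2 := hc j
    rw [compl_eq]
    omega
  obtain ⟨j, hj1, hj2⟩ := hcross
  have hsj := (start_spec S hp j).1
  -- j has a slot in the interval
  have hslot : ∃ u ∈ jobSlots S j, σ k.castSucc ≤ u ∧ u < σ k.succ := by
    by_cases h : σ k.castSucc ≤ startTime S j
    · exact ⟨_, hsj, h, hj1⟩
    · obtain ⟨m, hmm⟩ := Option.ne_none_iff_exists'.1 hu03
      have hmm' := (mem_js S m u0).2 hmm
      rcases lt_trichotomy m j with h5 | h5 | h5
      · have := ord' hord h5 hmm' hsj; omega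
      · subst h5; exact ⟨u0, hmm', hu01, hu02⟩
      · have := ord' hord h5 (hm j) hmm'; omega
  obtain ⟨u, huj, hu1, hu2⟩ := hslot
  have hua : S.assign u = some j := (mem_js _ _ _).1 huj
  have hut' : u < t' := by
    by_contra hc
    rcases eq_or_lt_of_le (not_lt.1 hc) with h | h
    · rw [h] at ht'n; simp [ht'n] at hua
    · have := hgap k t' u ht'1 h hu2 ht'n
      simp [this] at hua
  have htj : t' ∉ jobSlots S j := by rw [mem_js, ht'n]; simp
  have htL : t' < LN S j := by omega
  have hbef : ∀ i, i < j → ∀ x ∈ jobSlots S i, x + 1 < t' := by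
    intro i hi x hx
    have := ord' hord hi hx huj
    omega
  have haft : ∀ i, j < i → ∀ x ∈ jobSlots S i, t' < x := by
    intro i hi x hx
    have := ord' hord hi (hm j) hx
    omega
  have hbef' : ∀ i, i < j → ∀ x ∈ jobSlots S i, x < t' := by
    intro i hi x hx
    have := hbef i hi x hx
    omega
  have het' : e t' = ec k := hconst k t' ht'1 ht'2
  -- claim 1
  have hemax : ec k = emax e S j := by
    obtain ⟨⟨t, ht, hte⟩, hall⟩ := emax_spec e S hp j
    apply le_antisymm
    · rw [← hconst k u hu1 hu2]; exact hall u huj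
    · have := (left hS hord hp hw j j le_rfl t t' ht htj htL hbef' haft).1
      simp at this
      rw [← hte, ← het']; exact this
  have hjst : a ≤ startTime S j := by
    by_contra hc
    have h1 := (hsa.2 j).1 (by omega)
    rw [compl_eq] at h1
    have := (hin u hu1 hu2 (by rw [hua]; simp)).1
    have := le_LN S huj
    omega
  have hjsb : startTime S j < b := by omega
  have hjeq : j = jx := by
    obtain ⟨⟨t, ht, hte⟩, hall⟩ := emax_spec e S hp jx
    have hmax := hjx_max j hjst hjsb
    rcases lt_trichotomy j jx with hlt | heq | hlt
    · exfalso
      unfold dval at hmax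
      rw [pre_sum w hlt.le] at hmax
      have := left hS hord hp hw j jx hlt.le t t' ht htj htL hbef' haft
      have h1 := this.2 (by linarith [this.1])
      have := ord' hord hlt (hm j) ht
      omega
    · exact heq
    · exfalso
      have hne : dval w e S j < dval w e S jx :=
        lt_of_le_of_ne hmax (fun h => absurd (hjx_last j hjst hjsb h) (not_le.2 hlt))
      unfold dval at hne
      rw [pre_sum w hlt.le] at hne
      have := right hS hord hp hw jx j hlt t t' ht htj htL hbef haft ?_
      · linarith
      · intro i k' hi hik hk'
        have hilt : i < k' := by rw [Fin.lt_def]; omega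
        have hij : i < j := hilt.trans_le hk'
        have hLu : LN S i < u := ord' hord hij (hm i) huj
        cases has : S.assign (LN S i + 1) with
        | some m =>
          rw [mem_js, has]
          congr 1
          have hmm := (mem_js S m _).2 has
          rcases lt_trichotomy m k' with h | h | h
          · exfalso
            have hmi : m ≤ i := by rw [Fin.le_def]; rw [Fin.lt_def] at h; omega
            rcases eq_or_lt_of_le hmi with h5 | h5
            · rw [h5] at hmm
              have := le_LN S hmm
              omega
            · have := ord' hord h5 hmm (hm i)
              omega
          · exact h
          · exfalso
            have h5 := ord' hord h (hm k') hmm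
            have h6 := ord' hord hilt (hm i) (hm k')
            omega
        | none =>
          exfalso
          obtain ⟨q, hq1, hq2⟩ := find_int K σ D hσ0 hσD (LN S i) (lt_D S (hm i))
          have hidle : ∀ x, LN S i < x → x < σ q.succ → S.assign x = none := by
            intro x hx1 hx2
            by_cases hx : x = LN S i + 1
            · rw [hx]; exact has
            · exact hgap q (LN S i + 1) x (by omega) (by omega) hx2 has
          have huq : σ q.succ ≤ u := by
            by_contra hc
            have := hidle u hLu (by omega)
            simp [this] at hua
          have hLi : startTime S jx ≤ LN S i := by
            have h1 := (start_spec S hp jx).1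
            rcases eq_or_lt_of_le hi with h | h
            · rw [← h]; exact le_LN S h1
            · exact (ord' hord h h1 (hm i)).le
          apply hcons (σ q.succ) (by omega) (by omega)
          refine ⟨inP_σ K σ D hσD _, fun m => ?_⟩
          have hms := start_spec S hp m
          have h7 := hms.2 _ (hm m)
          rw [compl_eq]
          refine ⟨fun h => ?_, fun h => by omega⟩
          have h8 : startTime S m ≤ LN S i := by
            by_contra hc
            have h9 := hidle _ (not_le.1 hc) h
            have := (mem_js _ _ _).1 hms.1
            simp [h9] at this
          have hmi : m ≤ i := by
            by_contra hc
            have := ord' hord (not_le.1 hc) (hm i) hms.1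
            omega
          rcases eq_or_lt_of_le hmi with h5 | h5
          · rw [h5]; omega
          · have := ord' hord h5 (hm m) (hm i)
            omega
  subst hjeq
  refine ⟨⟨u, hu1, hu2, hua⟩, ?_, hemax⟩
  rintro i ⟨x, hx1, hx2, hx⟩
  by_contra hc
  have := ord' hord (not_le.1 hc) (hm j) ((mem_js _ _ _).2 hx)
  omega
end

section
/- Consider the single-machine makespan problem with utilization cost, with P = ∑_j p_j. The minimum over all schedules S of Cmax(S) + E(S), where Cmax(S) = max_j C_j(S), equals the minimum over all P-element subsets U of {0, 1, …, D−1} of the quantity (max U) + 1 + ∑_{t ∈ U} e(t). -/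
open Finset

variable {n D : ℕ} {p : Fin n → ℕ}

theorem mk_aux_card (S : Schedule n p D) :
    ((Finset.range D).filter (fun t => S.assign t ≠ none)).card = ∑ j, p j := by
  have h : (Finset.range D).filter (fun t => S.assign t ≠ none)
      = Finset.univ.biUnion (fun j => (Finset.range D).filter (fun t => S.assign t = some j)) := by
    ext t
    simp only [mem_filter, mem_biUnion, mem_univ, true_and, Option.ne_none_iff_exists']
    tauto
  rw [h, Finset.card_biUnion]
  · exact Finset.sum_congr rfl (fun j _ => S.card_slots j)
  · intro i _ j _ hij
    rw [Function.onFun, Finset.disjoint_left]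
    intro t h1 h2
    simp only [mem_filter] at h1 h2
    exact hij (Option.some.inj (h1.2.symm.trans h2.2))

theorem mk_aux_max (hn : 0 < n) (hp : ∀ j, 1 ≤ p j) (S : Schedule n p D) :
    (Finset.univ.sup fun j => completion S j) =
    WithBot.unbotD 0 ((Finset.range D).filter (fun t => S.assign t ≠ none)).max + 1 := by
  set U := (Finset.range D).filter (fun t => S.assign t ≠ none) with hU
  have hne : U.Nonempty := by
    rw [← Finset.card_pos, hU, mk_aux_card S]
    have := Finset.single_le_sum (f := p) (fun i _ => Nat.zero_le _) (Finset.mem_univ ⟨0, hn⟩)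
    have := hp ⟨0, hn⟩
    omega
  rw [← Finset.coe_max' hne, WithBot.unbotD_coe]
  apply le_antisymm
  · apply Finset.sup_le
    intro j _
    unfold completion
    apply Nat.succ_le_succ
    apply Finset.sup_le
    intro t ht
    apply Finset.le_max'
    simp only [jobSlots, mem_filter] at ht
    simp [hU, ht.2, Finset.mem_range.1 ht.1]
  · have hm := Finset.max'_mem U hne
    set m := U.max' hne
    simp only [hU, mem_filter, Option.ne_none_iff_exists'] at hm
    obtain ⟨h1, j, hj⟩ := hm
    refine le_trans ?_ (Finset.le_sup (f := fun j => completion S j) (Finset.mem_univ j))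
    apply Nat.succ_le_succ
    exact Finset.le_sup (f := id) (by simp only [jobSlots, mem_filter]; exact ⟨h1, hj⟩)

theorem mk_aux_exists (U : Finset ℕ) (hU : U ⊆ Finset.range D) (hc : U.card = ∑ j, p j) :
    ∃ S : Schedule n p D, (Finset.range D).filter (fun t => S.assign t ≠ none) = U := by
  have φ : U ≃ (Σ j : Fin n, Fin (p j)) := Fintype.equivOfCardEq (by simp [hc])
  refine ⟨⟨fun t => if h : t ∈ U then some (φ ⟨t, h⟩).1 else none, ?_, ?_⟩, ?_⟩
  · intro j
    have : p j = (Finset.univ : Finset (Fin (p j))).card := by simp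
    rw [this]
    symm
    refine Finset.card_bij (fun a _ => (φ.symm ⟨j, a⟩ : ℕ)) ?_ ?_ ?_
    · intro a _
      have h2 := (φ.symm ⟨j, a⟩).2
      simp only [mem_filter]
      exact ⟨hU h2, by simp⟩
    · intro a _ b _ h
      have := φ.symm.injective (Subtype.ext h)
      simpa using this
    · intro t ht
      simp only [mem_filter] at ht
      obtain ⟨h1, h2⟩ := ht
      split_ifs at h2 with h
      have h3 := Option.some.inj h2
      obtain ⟨⟨i, a⟩, hx⟩ : ∃ x, x = φ ⟨t, h⟩ := ⟨_, rfl⟩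
      rw [← hx] at h3
      simp only at h3
      subst h3
      exact ⟨a, Finset.mem_univ _, by rw [hx]; simp⟩
  · intro t ht
    have : t ∉ U := fun h => by
      have := Finset.mem_range.1 (hU h)
      omega
    simp [this]
  · ext t
    simp only [mem_filter]
    constructor
    · rintro ⟨_, h⟩
      by_contra h'
      simp [h'] at h
    · intro h
      exact ⟨hU h, by simp [h]⟩

/-- The minimum of makespan plus utilization cost over all schedules equals the
minimum over all `P`-element subsets `U ⊆ {0, …, D−1}` of `max U + 1 + ∑_{t ∈ U} e(t)`,
where `P = ∑_j p_j`. -/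
theorem makespan_min_eq_subset_min (n : ℕ) (hn : 0 < n)
    (p : Fin n → ℕ) (hp : ∀ j, 1 ≤ p j)
    (e : ℕ → ℚ) (he : ∀ t, 0 ≤ e t) (D : ℕ) (hD : ∑ j, p j ≤ D) :
    ∃ c : ℚ,
      IsLeast {x : ℚ | ∃ S : Schedule n p D,
        x = ((Finset.univ.sup fun j => completion S j : ℕ) : ℚ) + ucost e S} c ∧
      IsLeast {x : ℚ | ∃ U : Finset ℕ, U ⊆ Finset.range D ∧ U.card = ∑ j, p j ∧
        x = ((WithBot.unbotD 0 U.max + 1 : ℕ) : ℚ) + ∑ t ∈ U, e t} c := by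
  have hset : {x : ℚ | ∃ S : Schedule n p D,
        x = ((Finset.univ.sup fun j => completion S j : ℕ) : ℚ) + ucost e S} =
      {x : ℚ | ∃ U : Finset ℕ, U ⊆ Finset.range D ∧ U.card = ∑ j, p j ∧
        x = ((WithBot.unbotD 0 U.max + 1 : ℕ) : ℚ) + ∑ t ∈ U, e t} := by
    ext x
    constructor
    · rintro ⟨S, rfl⟩
      refine ⟨_, Finset.filter_subset _ _, mk_aux_card S, ?_⟩
      rw [mk_aux_max hn hp S]
      rfl
    · rintro ⟨U, h1, h2, rfl⟩
      obtain ⟨S, hS⟩ := mk_aux_exists U h1 h2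
      refine ⟨S, ?_⟩
      rw [mk_aux_max hn hp S, ucost, hS]
  rw [hset]
  obtain ⟨U, hU, hmin⟩ := Finset.exists_min_image ((Finset.range D).powersetCard (∑ j, p j))
    (fun U => ((WithBot.unbotD 0 U.max + 1 : ℕ) : ℚ) + ∑ t ∈ U, e t)
    (Finset.powersetCard_nonempty.2 (by simpa using hD))
  rw [Finset.mem_powersetCard] at hU
  have key : IsLeast {x : ℚ | ∃ U : Finset ℕ, U ⊆ Finset.range D ∧ U.card = ∑ j, p j ∧
        x = ((WithBot.unbotD 0 U.max + 1 : ℕ) : ℚ) + ∑ t ∈ U, e t}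
      (((WithBot.unbotD 0 U.max + 1 : ℕ) : ℚ) + ∑ t ∈ U, e t) := by
    refine ⟨⟨U, hU.1, hU.2, rfl⟩, ?_⟩
    rintro x ⟨V, h1, h2, rfl⟩
    exact hmin V (Finset.mem_powersetCard.2 ⟨h1, h2⟩)
  exact ⟨_, key, key⟩
end
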